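/- Let Ω ⊂ ℂⁿ be open and let ν : Ω → [0,∞) be measurable such that for every compact set K ⊂ Ω there is a constant c_K > 0 with ν ≥ c_K λ-almost everywhere on K. Let μ be the measure ν·λ on Ω. Then the set A²(Ω,μ) of those elements of L²(Ω,μ) that possess a representative which is holomorphic on Ω is a closed linear subspace of L²(Ω,μ). -/

import Mathlib

open MeasureTheory

/-!
At every point of `Ω` a holomorphic function is the average of its values over a small closed ball,
so Hölder's inequality bounds it, locally uniformly, by its `Lᵖ` norm for Haar measure `m` on a
compact subset of `Ω`, and hence by its `Lᵖ(μ)` norm, because `m` is dominated there by a multiple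
of `μ`. Holomorphic representatives of an `Lᵖ(μ)`-convergent sequence are therefore locally
uniformly Cauchy. Their limit is holomorphic by the Weierstrass convergence theorem, and it
represents the `Lᵖ(μ)` limit because a subsequence converges almost everywhere.
-/

open Filter Metric Set
open scoped ENNReal NNReal Topology

section HaarMeasure

theorem measurePreserving_linearIsometryEquiv {E : Type*} [NormedAddCommGroup E] [NormedSpace ℝ E]
    [FiniteDimensional ℝ E] [MeasurableSpace E] [BorelSpace E] (m : Measure E)
    [m.IsAddHaarMeasure] (e : E ≃ₗᵢ[ℝ] E) : MeasurePreserving e m m := by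
  refine ⟨e.continuous.measurable, ?_⟩
  have map_eq_smul := Measure.map_linearMap_addHaar_eq_smul_addHaar m
    (LinearEquiv.isUnit_det' e.toLinearEquiv).ne_zero
  have map_ball : m.map e (ball 0 1) = m (ball 0 1) := by
    rw [Measure.map_apply e.continuous.measurable measurableSet_ball, e.preimage_ball, map_zero]
  set a := ENNReal.ofReal |(LinearMap.det (e.toLinearEquiv : E →ₗ[ℝ] E))⁻¹|
  change m.map e = a • m at map_eq_smul
  have a_eq_one : a = 1 := by
    rw [map_eq_smul, Measure.smul_apply, smul_eq_mul] at map_ball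
    exact (ENNReal.mul_eq_right (measure_ball_pos m 0 one_pos).ne' measure_ball_lt_top.ne).1
      map_ball
  rw [map_eq_smul, a_eq_one, one_smul]

variable {E : Type*} [NormedAddCommGroup E] [NormedSpace ℂ E] [FiniteDimensional ℂ E]
  [MeasurableSpace E] [BorelSpace E] (m : Measure E) [m.IsAddHaarMeasure]

theorem measurePreserving_smul_of_norm_eq_one {c : ℂ} (hc : ‖c‖ = 1) :
    MeasurePreserving (fun w : E => c • w) m m := by
  let f : E →ₗᵢ[ℝ] E :=
    { toLinearMap := (c • LinearMap.id : E →ₗ[ℂ] E).restrictScalars ℝ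
      norm_map' := fun w => by simp [norm_smul, hc] }
  exact measurePreserving_linearIsometryEquiv m (f.toLinearIsometryEquiv rfl)

theorem setIntegral_closedBall_comp_smul {F : Type*} [NormedAddCommGroup F] [NormedSpace ℝ F]
    {c : ℂ} (hc : ‖c‖ = 1) (f : E → F) (r : ℝ) :
    ∫ w in closedBall 0 r, f (c • w) ∂m = ∫ w in closedBall 0 r, f w ∂m := by
  have hc₀ : c ≠ 0 := by rintro rfl; simp at hc
  have preimage_closedBall : (c • ·) ⁻¹' closedBall (0 : E) r = closedBall 0 r := by
    ext w
    simp [norm_smul, hc]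
  simpa only [preimage_closedBall] using
    (measurePreserving_smul_of_norm_eq_one m hc).setIntegral_preimage_emb
      (measurableEmbedding_const_smul₀ hc₀) f (closedBall 0 r)

theorem circleAverage_setIntegral_closedBall_add_smul {F : Type*} [NormedAddCommGroup F]
    [NormedSpace ℝ F] {g : E → F} {z : E} {r : ℝ} (hg : ContinuousOn g (closedBall z r)) :
    Real.circleAverage (fun ζ : ℂ => ∫ w in closedBall 0 r, g (z + ζ • w) ∂m) 0 1 =
      ∫ w in closedBall 0 r, Real.circleAverage (fun ζ : ℂ => g (z + ζ • w)) 0 1 ∂m := by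
  have : ProperSpace E := FiniteDimensional.proper ℂ E
  have continuousOn_prod : ContinuousOn (fun q : ℝ × E => g (z + circleMap 0 1 q.1 • q.2))
      (uIcc 0 (2 * Real.pi) ×ˢ closedBall 0 r) := by
    refine hg.comp (by fun_prop) fun q hq => ?_
    simpa [norm_smul] using hq.2
  have integrable_prod : Integrable (fun q : ℝ × E => g (z + circleMap 0 1 q.1 • q.2))
      ((volume.restrict (uIoc 0 (2 * Real.pi))).prod (m.restrict (closedBall 0 r))) := by
    rw [Measure.prod_restrict]
    exact (continuousOn_prod.integrableOn_compact
      (isCompact_uIcc.prod (isCompact_closedBall 0 r))).mono_set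
      (prod_mono uIoc_subset_uIcc subset_rfl)
  simp only [Real.circleAverage_def]
  rw [intervalIntegral_integral_swap integrable_prod, integral_smul]

end HaarMeasure

section MeanValue

variable {E F : Type*} [NormedAddCommGroup E] [NormedSpace ℂ E]
  [NormedAddCommGroup F] [NormedSpace ℂ F] [CompleteSpace F] {g : E → F} {z : E} {r : ℝ}

theorem circleAverage_add_smul_eq_of_diffContOnCl (hr : 0 < r)
    (hg : DiffContOnCl ℂ g (ball z r)) {w : E} (hw : w ∈ closedBall 0 r) :
    Real.circleAverage (fun ζ : ℂ => g (z + ζ • w)) 0 1 = g z := by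
  have line_mapsTo : MapsTo (fun ζ : ℂ => z + ζ • w) (ball 0 |1|) (ball z r) := by
    intro ζ hζ
    rw [abs_one, mem_ball_zero_iff] at hζ
    rw [mem_closedBall_zero_iff] at hw
    rw [mem_ball_iff_norm, add_sub_cancel_left, norm_smul]
    nlinarith [norm_nonneg w, norm_nonneg ζ]
  have line_differentiable : Differentiable ℂ fun ζ : ℂ => z + ζ • w := by fun_prop
  calc Real.circleAverage (fun ζ : ℂ => g (z + ζ • w)) 0 1
      = g (z + (0 : ℂ) • w) :=
        DiffContOnCl.circleAverage (hg.comp line_differentiable.diffContOnCl line_mapsTo)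
    _ = g z := by rw [zero_smul, add_zero]

variable [FiniteDimensional ℂ E] [MeasurableSpace E] [BorelSpace E]
  (m : Measure E) [m.IsAddHaarMeasure]

theorem setAverage_closedBall_eq_of_diffContOnCl (hr : 0 < r)
    (hg : DiffContOnCl ℂ g (ball z r)) : ⨍ w in closedBall z r, g w ∂m = g z := by
  have : ProperSpace E := FiniteDimensional.proper ℂ E
  have preimage_closedBall : (z + ·) ⁻¹' closedBall z r = closedBall 0 r := by
    rw [preimage_add_closedBall, sub_self]
  have translate : ∫ w in closedBall z r, g w ∂m = ∫ w in closedBall 0 r, g (z + w) ∂m := by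
    rw [← preimage_closedBall]
    exact ((measurePreserving_add_left m z).setIntegral_preimage_emb
      (measurableEmbedding_addLeft z) g _).symm
  have rotate : ∀ ζ ∈ sphere (0 : ℂ) |1|,
      ∫ w in closedBall 0 r, g (z + ζ • w) ∂m = ∫ w in closedBall 0 r, g (z + w) ∂m :=
    fun ζ hζ => setIntegral_closedBall_comp_smul m (by simpa using hζ) (fun w => g (z + w)) r
  have integral_eq : ∫ w in closedBall z r, g w ∂m = m.real (closedBall z r) • g z :=
    calc ∫ w in closedBall z r, g w ∂m
        = Real.circleAverage (fun ζ : ℂ => ∫ w in closedBall 0 r, g (z + ζ • w) ∂m) 0 1 := by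
          rw [translate, Real.circleAverage_const_on_circle rotate]
      _ = ∫ w in closedBall 0 r, Real.circleAverage (fun ζ : ℂ => g (z + ζ • w)) 0 1 ∂m :=
          circleAverage_setIntegral_closedBall_add_smul m hg.continuousOn_ball
      _ = ∫ _ in closedBall (0 : E) r, g z ∂m :=
          setIntegral_congr_fun measurableSet_closedBall fun w hw =>
            circleAverage_add_smul_eq_of_diffContOnCl hr hg hw
      _ = m.real (closedBall z r) • g z := by
          rw [setIntegral_const, measureReal_def, measureReal_def,
            Measure.addHaar_closedBall_center m z]
  have measureReal_ne_zero : m.real (closedBall z r) ≠ 0 :=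
    (ENNReal.toReal_pos (measure_closedBall_pos m z hr).ne' measure_closedBall_lt_top.ne).ne'
  rw [setAverage_eq, integral_eq, inv_smul_smul₀ measureReal_ne_zero]

theorem enorm_le_mul_eLpNorm_closedBall (hr : 0 < r) (hg : DiffContOnCl ℂ g (ball z r))
    {p : ℝ≥0∞} (hp : 1 ≤ p) :
    ‖g z‖ₑ ≤ (m (closedBall z r))⁻¹ ^ (1 / p).toReal *
      eLpNorm g p (m.restrict (closedBall z r)) := by
  have : ProperSpace E := FiniteDimensional.proper ℂ E
  have measure_ne_zero : m (closedBall z r) ≠ 0 := (measure_closedBall_pos m z hr).ne'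
  set P := (m (closedBall z r))⁻¹ • m.restrict (closedBall z r)
  have : IsProbabilityMeasure P := ProbabilityTheory.cond_isProbabilityMeasure_of_finite
    measure_ne_zero measure_closedBall_lt_top.ne
  have aestronglyMeasurable : AEStronglyMeasurable g P :=
    (hg.continuousOn_ball.aestronglyMeasurable measurableSet_closedBall).smul_measure _
  calc ‖g z‖ₑ = ‖∫ w, g w ∂P‖ₑ := by
        rw [← setAverage_closedBall_eq_of_diffContOnCl m hr hg, setAverage_eq']
    _ ≤ eLpNorm g 1 P := by
        rw [eLpNorm_one_eq_lintegral_enorm]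
        exact enorm_integral_le_lintegral_enorm g
    _ ≤ eLpNorm g p P := eLpNorm_le_eLpNorm_of_exponent_le hp aestronglyMeasurable
    _ ≤ _ := eLpNorm_smul_measure_le _ g p _

theorem exists_forall_enorm_le_mul_eLpNorm {μ : Measure E} {t : Set E} (ht : t ∈ 𝓝 z) {C : ℝ≥0}
    (hμ : m.restrict t ≤ C • μ) {p : ℝ≥0∞} (hp : 1 ≤ p) :
    ∃ D : ℝ≥0, ∃ s ∈ 𝓝 z, ∀ g : E → F, DifferentiableOn ℂ g t →
      ∀ w ∈ s, ‖g w‖ₑ ≤ D * eLpNorm g p μ := by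
  obtain ⟨r, hr, hrt⟩ := nhds_basis_closedBall.mem_iff.1 ht
  have half_pos : 0 < r / 2 := by positivity
  set A := (m (closedBall 0 (r / 2)))⁻¹ ^ (1 / p).toReal
  set B := (C : ℝ≥0∞) ^ (1 / p).toReal
  have A_ne_top : A ≠ ∞ := ENNReal.rpow_ne_top_of_nonneg ENNReal.toReal_nonneg
    (ENNReal.inv_ne_top.2 (measure_closedBall_pos m 0 half_pos).ne')
  have B_ne_top : B ≠ ∞ := ENNReal.rpow_ne_top_of_nonneg ENNReal.toReal_nonneg ENNReal.coe_ne_top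
  refine ⟨(A * B).toNNReal, ball z (r / 2), ball_mem_nhds z half_pos, fun g hg w hw => ?_⟩
  have closedBall_subset : closedBall w (r / 2) ⊆ t :=
    (closedBall_subset_closedBall' (by linarith [mem_ball.1 hw])).trans hrt
  have eLpNorm_le : eLpNorm g p (m.restrict (closedBall w (r / 2))) ≤ B * eLpNorm g p μ :=
    calc eLpNorm g p (m.restrict (closedBall w (r / 2)))
        ≤ eLpNorm g p ((C : ℝ≥0∞) • μ) :=
          eLpNorm_mono_measure g ((Measure.restrict_mono_set m closedBall_subset).trans hμ)
      _ ≤ B * eLpNorm g p μ := eLpNorm_smul_measure_le _ g p μ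
  calc ‖g w‖ₑ ≤ A * eLpNorm g p (m.restrict (closedBall w (r / 2))) := by
        simpa only [Measure.addHaar_closedBall_center] using enorm_le_mul_eLpNorm_closedBall m
          half_pos (hg.diffContOnCl_ball closedBall_subset) hp
    _ ≤ A * (B * eLpNorm g p μ) := by gcongr
    _ = (A * B).toNNReal * eLpNorm g p μ := by
        rw [ENNReal.coe_toNNReal (ENNReal.mul_ne_top A_ne_top B_ne_top), mul_assoc]

end MeanValue

section Weierstrass

variable {E F ι : Type*} [NormedAddCommGroup E] [NormedSpace ℂ E]
  [NormedAddCommGroup F] [NormedSpace ℂ F] {g : ι → E → F} {l : Filter ι}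

theorem uniformCauchySeqOn_fderiv_of_thickening_subset {s U : Set E} {r : ℝ} (hr : 0 < r)
    (hU : IsOpen U) (hsU : thickening r s ⊆ U) (hgd : ∀ k, DifferentiableOn ℂ (g k) U)
    (hgc : UniformCauchySeqOn g l U) :
    UniformCauchySeqOn (fun k => fderiv ℂ (g k)) l s := by
  intro u hu
  obtain ⟨ε, hε, hεu⟩ := mem_uniformity_dist.1 hu
  filter_upwards [hgc _ (dist_mem_uniformity (show 0 < ε * r / 4 by positivity))] with
    ⟨i, j⟩ hij w hw
  have ball_subset : ball w r ⊆ U := (ball_subset_thickening hw r).trans hsU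
  have differentiableAt : ∀ n, DifferentiableAt ℂ (g n) w := fun n =>
    (hgd n).differentiableAt (hU.mem_nhds (ball_subset (mem_ball_self hr)))
  have norm_lt : ∀ y ∈ ball w r, ‖(g i - g j) y‖ < ε * r / 4 := fun y hy => by
    simpa [dist_eq_norm] using hij y (ball_subset hy)
  have mapsTo_closedBall :
      MapsTo (g i - g j) (ball w r) (closedBall ((g i - g j) w) (ε * r / 2)) := fun y hy => by
    rw [mem_closedBall, dist_eq_norm]
    linarith [norm_sub_le ((g i - g j) y) ((g i - g j) w), norm_lt y hy,
      norm_lt w (mem_ball_self hr)]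
  apply hεu
  calc dist (fderiv ℂ (g i) w) (fderiv ℂ (g j) w)
      = ‖fderiv ℂ (g i - g j) w‖ := by
        rw [dist_eq_norm, fderiv_sub (differentiableAt i) (differentiableAt j)]
    _ ≤ ε * r / 2 / r := Complex.norm_fderiv_le_div_of_mapsTo_ball
        (((hgd i).sub (hgd j)).mono ball_subset) mapsTo_closedBall hr
    _ < ε := by
        rw [div_lt_iff₀ hr]
        linarith [mul_pos hε hr]

variable [CompleteSpace F] [l.NeBot]

theorem differentiableOn_of_tendstoUniformlyOn {U : Set E} {G : E → F} (hU : IsOpen U)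
    (hgd : ∀ k, DifferentiableOn ℂ (g k) U) (hgG : TendstoUniformlyOn g G l U) :
    DifferentiableOn ℂ G U := by
  intro z hz
  obtain ⟨r, hr, hrU⟩ := isOpen_iff.1 hU z hz
  have thickening_subset : thickening (r / 2) (ball z (r / 2)) ⊆ U :=
    (Metric.thickening_ball z (r / 2) (r / 2)).trans (by rwa [add_halves])
  have subset_U : ball z (r / 2) ⊆ U := (self_subset_thickening (by positivity) _).trans
    thickening_subset
  have fderiv_cauchy : UniformCauchySeqOn (fun k => fderiv ℂ (g k)) l (ball z (r / 2)) :=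
    uniformCauchySeqOn_fderiv_of_thickening_subset (by positivity) hU thickening_subset hgd
      hgG.uniformCauchySeqOn
  have fderiv_tendsto : TendstoUniformlyOn (fun k => fderiv ℂ (g k))
      (fun w => limUnder l fun k => fderiv ℂ (g k) w) l (ball z (r / 2)) :=
    fderiv_cauchy.tendstoUniformlyOn_of_tendsto
      fun w hw => (fderiv_cauchy.cauchy_map hw).le_nhds_lim
  exact (hasFDerivAt_of_tendstoUniformlyOn isOpen_ball fderiv_tendsto
    (fun k w hw => ((hgd k).differentiableAt (hU.mem_nhds (subset_U hw))).hasFDerivAt)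
    (fun w hw => hgG.tendsto_at (subset_U hw))
    (mem_ball_self (by positivity))).differentiableAt.differentiableWithinAt

theorem exists_differentiableOn_tendsto_of_uniformCauchySeqOn_nhds {Ω : Set E} (hΩ : IsOpen Ω)
    (hgd : ∀ k, DifferentiableOn ℂ (g k) Ω)
    (hgc : ∀ z ∈ Ω, ∃ s ∈ 𝓝 z, UniformCauchySeqOn g l s) :
    ∃ G : E → F, DifferentiableOn ℂ G Ω ∧ ∀ z ∈ Ω, Tendsto (g · z) l (𝓝 (G z)) := by
  have tendsto_lim : ∀ z ∈ Ω, Tendsto (g · z) l (𝓝 (limUnder l (g · z))) := fun z hz => by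
    obtain ⟨s, hs, hgs⟩ := hgc z hz
    exact (hgs.cauchy_map (mem_of_mem_nhds hs)).le_nhds_lim
  refine ⟨fun z => limUnder l (g · z), fun z hz => ?_, tendsto_lim⟩
  obtain ⟨s, hs, hgs⟩ := hgc z hz
  obtain ⟨U, hUs, hU, hzU⟩ := _root_.mem_nhds_iff.1 (inter_mem hs (hΩ.mem_nhds hz))
  have tendstoUniformlyOn : TendstoUniformlyOn g (fun w => limUnder l (g · w)) l U :=
    (hgs.mono (hUs.trans inter_subset_left)).tendstoUniformlyOn_of_tendsto
      fun w hw => tendsto_lim w (hUs hw).2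
  exact ((differentiableOn_of_tendstoUniformlyOn hU
    (fun k => (hgd k).mono (hUs.trans inter_subset_right)) tendstoUniformlyOn).differentiableAt
      (hU.mem_nhds hzU)).differentiableWithinAt

end Weierstrass

theorem restrict_le_smul_withDensity {α : Type*} [MeasurableSpace α] {m : Measure α}
    {Ω K : Set α} (hKΩ : K ⊆ Ω) {ν : α → ℝ} {c : ℝ} (hc : 0 < c)
    (hcν : ∀ᵐ z ∂m.restrict K, c ≤ ν z) :
    m.restrict K ≤
      c.toNNReal⁻¹ • (m.restrict Ω).withDensity fun z => ENNReal.ofReal (ν z) := by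
  have c_ne_zero : c.toNNReal ≠ 0 := (Real.toNNReal_pos.2 hc).ne'
  have smul_le : c.toNNReal • m.restrict K ≤
      (m.restrict Ω).withDensity fun z => ENNReal.ofReal (ν z) :=
    calc c.toNNReal • m.restrict K
        = (m.restrict K).withDensity fun _ => ENNReal.ofReal c := (withDensity_const _).symm
      _ ≤ (m.restrict K).withDensity fun z => ENNReal.ofReal (ν z) :=
        withDensity_mono (hcν.mono fun _ => ENNReal.ofReal_le_ofReal)
      _ ≤ (m.restrict Ω).withDensity fun z => ENNReal.ofReal (ν z) :=
        Measure.le_iff.2 fun s hs => by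
          rw [withDensity_apply _ hs, withDensity_apply _ hs]
          exact lintegral_mono' (Measure.restrict_mono_measure
            (Measure.restrict_mono_set m hKΩ) s) le_rfl
  calc m.restrict K = c.toNNReal⁻¹ • c.toNNReal • m.restrict K := (inv_smul_smul₀ c_ne_zero _).symm
    _ ≤ _ := by gcongr

theorem ae_eq_of_tendsto_Lp_of_tendsto {α F : Type*} [MeasurableSpace α] [NormedAddCommGroup F]
    {μ : Measure α} {p : ℝ≥0∞} [Fact (1 ≤ p)] {f : ℕ → Lp F p μ} {f₀ : Lp F p μ}
    {g : ℕ → α → F} {G : α → F} {s : Set α}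
    (hf : Tendsto f atTop (𝓝 f₀)) (hfg : ∀ k, f k =ᵐ[μ] g k)
    (hg : ∀ z ∈ s, Tendsto (g · z) atTop (𝓝 (G z))) : ∀ᵐ z ∂μ, z ∈ s → f₀ z = G z := by
  obtain ⟨φ, hφ, subseq_tendsto⟩ := (tendstoInMeasure_of_tendsto_Lp hf).exists_seq_tendsto_ae
  filter_upwards [subseq_tendsto, ae_all_iff.2 hfg] with z hz hfgz hzs
  simp only [hfgz] at hz
  exact tendsto_nhds_unique hz ((hg z hzs).comp hφ.tendsto_atTop)

section BergmanSpace

variable {E F : Type*} [NormedAddCommGroup E] [NormedSpace ℂ E] [MeasurableSpace E]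
  [NormedAddCommGroup F] [NormedSpace ℂ F] {Ω : Set E} {p : ℝ≥0∞} {μ : Measure E}

variable (F Ω p μ) in
/-- The Bergman space of `Ω` with respect to `μ`: the classes in `Lᵖ(μ)` that have a representative
holomorphic on `Ω`. The measure `μ` lives on the whole ambient space; it plays the role of a
measure on `Ω` when it vanishes off `Ω`. -/
def bergmanSpace : Submodule ℂ (Lp F p μ) where
  carrier := {f | ∃ g : E → F, DifferentiableOn ℂ g Ω ∧ f =ᵐ[μ] g}
  zero_mem' := ⟨0, differentiableOn_const 0, Lp.coeFn_zero F p μ⟩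
  add_mem' := by
    rintro f₁ f₂ ⟨g₁, hg₁, hfg₁⟩ ⟨g₂, hg₂, hfg₂⟩
    exact ⟨g₁ + g₂, hg₁.add hg₂, (Lp.coeFn_add f₁ f₂).trans (hfg₁.add hfg₂)⟩
  smul_mem' := by
    rintro c f ⟨g, hg, hfg⟩
    exact ⟨c • g, hg.const_smul c, (Lp.coeFn_smul c f).trans (hfg.const_smul c)⟩

variable [Fact (1 ≤ p)] [CompleteSpace F] [FiniteDimensional ℂ E] [BorelSpace E]
  (m : Measure E) [m.IsAddHaarMeasure]

theorem exists_nhds_uniformCauchySeqOn_of_cauchy_Lp {ι : Type*} {l : Filter ι} {t : Set E} {z : E}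
    (ht : t ∈ 𝓝 z) {C : ℝ≥0} (hμ : m.restrict t ≤ C • μ) {f : ι → Lp F p μ} {g : ι → E → F}
    (hgd : ∀ k, DifferentiableOn ℂ (g k) t) (hfg : ∀ k, f k =ᵐ[μ] g k) (hf : Cauchy (map f l)) :
    ∃ s ∈ 𝓝 z, UniformCauchySeqOn g l s := by
  obtain ⟨D, s, hs, enorm_le⟩ :=
    exists_forall_enorm_le_mul_eLpNorm (F := F) m ht hμ (Fact.out : 1 ≤ p)
  refine ⟨s, hs, fun u hu => ?_⟩
  obtain ⟨ε, hε, hεu⟩ := mem_uniformity_edist.1 hu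
  filter_upwards [(cauchy_map_iff.1 hf).2
    (edist_mem_uniformity (ENNReal.div_pos hε.ne' (ENNReal.coe_ne_top (r := D))))]
    with ⟨i, j⟩ hij w hw
  apply hεu
  calc edist (g i w) (g j w) = ‖(g i - g j) w‖ₑ := edist_eq_enorm_sub _ _
    _ ≤ D * eLpNorm (g i - g j) p μ := enorm_le _ ((hgd i).sub (hgd j)) w hw
    _ = D * edist (f i) (f j) := by
        rw [Lp.edist_def, eLpNorm_congr_ae ((hfg i).sub (hfg j))]
    _ < ε := ENNReal.mul_lt_of_lt_div' hij

theorem stmt_10_general (hΩ : IsOpen Ω)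
    (hμ : ∀ K : Set E, IsCompact K → K ⊆ Ω → ∃ C : ℝ≥0, m.restrict K ≤ C • μ) :
    IsClosed (bergmanSpace F Ω p μ : Set (Lp F p μ)) := by
  classical
  have : ProperSpace E := FiniteDimensional.proper ℂ E
  refine IsSeqClosed.isClosed fun f f₀ hf hff₀ => ?_
  choose g hgd hfg using hf
  have locally_cauchy : ∀ z ∈ Ω, ∃ s ∈ 𝓝 z, UniformCauchySeqOn g atTop s := fun z hz => by
    obtain ⟨K, hK, hKΩ, hKc⟩ := local_compact_nhds (hΩ.mem_nhds hz)
    obtain ⟨C, hC⟩ := hμ K hKc hKΩ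
    exact exists_nhds_uniformCauchySeqOn_of_cauchy_Lp m hK hC (fun k => (hgd k).mono hKΩ) hfg
      hff₀.cauchySeq
  obtain ⟨G, hGd, hG⟩ :=
    exists_differentiableOn_tendsto_of_uniformCauchySeqOn_nhds hΩ hgd locally_cauchy
  -- Holomorphy is only required on `Ω`, so `f₀` itself can serve as the representative off `Ω`.
  refine ⟨Ω.piecewise G f₀, hGd.congr (piecewise_eqOn Ω G f₀), ?_⟩
  filter_upwards [ae_eq_of_tendsto_Lp_of_tendsto hff₀ hfg hG] with z hz
  by_cases hzΩ : z ∈ Ω <;> simp [hzΩ, hz]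

end BergmanSpace

/-- If the weight `ν` is locally essentially bounded below by positive constants on the open
set `Ω ⊆ ℂⁿ`, then the subset of `L²(Ω, ν·λ)` consisting of classes possessing a holomorphic
representative is a closed linear subspace (i.e. `ν` is an admissible weight). -/
theorem stmt_10 (n : ℕ) (Ω : Set (Fin n → ℂ)) (hΩ : IsOpen Ω)
    (ν : (Fin n → ℂ) → ℝ) (hν_meas : Measurable ν) (hν_nonneg : ∀ z, 0 ≤ ν z)
    (hν_below : ∀ K : Set (Fin n → ℂ), IsCompact K → K ⊆ Ω →
      ∃ c : ℝ, 0 < c ∧ ∀ᵐ z ∂(volume.restrict K), c ≤ ν z)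
    (μ : Measure (Fin n → ℂ))
    (hμ : μ = (volume.restrict Ω).withDensity fun z => ENNReal.ofReal (ν z)) :
    ∃ S : Submodule ℂ (Lp ℂ 2 μ),
      (S : Set (Lp ℂ 2 μ)) =
        {f | ∃ g : (Fin n → ℂ) → ℂ, DifferentiableOn ℂ g Ω ∧ ∀ᵐ z ∂μ, f z = g z} ∧
      IsClosed (S : Set (Lp ℂ 2 μ)) :=
  ⟨bergmanSpace ℂ Ω 2 μ, rfl, stmt_10_general volume hΩ fun K hK hKΩ =>
    (hν_below K hK hKΩ).elim fun _ hc => ⟨_, hμ ▸ restrict_le_smul_withDensity hKΩ hc.1 hc.2⟩⟩
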